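/- arXiv:2407.07741 — 2 statements merged into one kernel-verified Lean document; each statement's English description precedes it below -/
import Mathlib

section
/- Let R be a poset function on a nonempty finite set V, and let G_R be its underlying digraph. If w ∈ R(u,v) and R(u,v) ≠ ∅, then there exists a directed path in G_R from u to v that passes through w. -/
/-- A directed path from `u` to `v` w.r.t. the edge relation `E`: a nonempty list of
pairwise distinct vertices starting at `u`, ending at `v`, with every consecutive pair
an edge. -/
def IsDiPath {V : Type*} (E : V → V → Prop) (u v : V) (p : List V) : Prop :=
  p.Chain' E ∧ p.Nodup ∧ p.head? = some u ∧ p.getLast? = some v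

/-- The edge relation of the underlying digraph `G_R` of `R`. -/
def underlyingEdge {V : Type*} (R : V → V → Set V) (x y : V) : Prop :=
  x ≠ y ∧ R x y = {x, y}

/-!
Declaring `u ≤ v` when `R u v` is nonempty makes `V` a partial order whose closed intervals are
exactly the sets `R u v`. The edges of `G_R` are then the covering pairs, so a path from `u` to `v`
through `w` is a maximal chain in `[u, w]` followed by one in `[w, v]`; its vertices are distinct
because they strictly increase.
-/

/-- `R` is a poset function: a directed transit function, which is (t0), (t1) and (t3), that also
satisfies (t2a), (tr1) and (tr2). Bundling the axioms lets `R` be replaced by the closed intervals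
of a partial order. -/
structure IsPosetFunction {V : Type*} (R : V → V → Set V) : Prop where
  t0 : ∀ u v w, R u w ≠ ∅ → R w v ≠ ∅ → R u v ≠ ∅
  t1 : ∀ u v, R u v ≠ ∅ → u ∈ R u v ∧ v ∈ R u v
  t3 : ∀ u, R u u = {u}
  t2a : ∀ u v, R u v ≠ ∅ → u ≠ v → R v u = ∅
  tr1 : ∀ u v w, u ≠ v → R u w ≠ ∅ → R w v ≠ ∅ → R u w ∪ R w v ⊆ R u v
  tr2 : ∀ u v w, u ≠ v → (R u w = ∅ ∨ R w v = ∅) → w ∉ R u v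

namespace IsPosetFunction

variable {V : Type*} {R : V → V → Set V}

/-- The order attached to a poset function: `u ≤ v` when `R u v` is nonempty. -/
abbrev partialOrder (hR : IsPosetFunction R) : PartialOrder V where
  le u v := R u v ≠ ∅
  le_refl u := by simp [hR.t3]
  le_trans u w v := hR.t0 u v w
  le_antisymm u v huv hvu := by_contra fun hne => hvu (hR.t2a u v huv hne)

theorem mem_iff (hR : IsPosetFunction R) {u v w : V} :
    w ∈ R u v ↔ R u w ≠ ∅ ∧ R w v ≠ ∅ := by
  rcases eq_or_ne u v with rfl | huv
  · let _ := hR.partialOrder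
    rw [hR.t3, Set.mem_singleton_iff]
    exact (le_antisymm_iff (a := w) (b := u)).trans and_comm
  · constructor
    · intro hw
      exact not_or.mp fun hempty => hR.tr2 u v w huv hempty hw
    · rintro ⟨huw, hwv⟩
      exact hR.tr1 u v w huv huw hwv (.inl (hR.t1 u w huw).2)

theorem exists_partialOrder_eq_Icc (hR : IsPosetFunction R) :
    ∃ _ : PartialOrder V, R = Set.Icc :=
  ⟨hR.partialOrder, funext₂ fun _ _ => Set.ext fun _ => hR.mem_iff⟩

end IsPosetFunction

section PartialOrder

variable {V : Type*} [PartialOrder V] {u v : V}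

theorem underlyingEdge_Icc_iff_covBy : underlyingEdge Set.Icc u v ↔ u ⋖ v := by
  constructor
  · rintro ⟨hne, hIcc⟩
    have huv : u ≤ v := Set.nonempty_Icc.mp (hIcc ▸ Set.insert_nonempty u {v})
    refine ⟨huv.lt_of_ne hne, fun x hux hxv => ?_⟩
    have hx : x ∈ ({u, v} : Set V) := hIcc ▸ ⟨hux.le, hxv.le⟩
    exact hx.elim hux.ne' hxv.ne
  · exact fun h => ⟨h.ne, h.Icc_eq⟩

theorem underlyingEdge_Icc_eq_covBy : underlyingEdge (Set.Icc (α := V)) = (· ⋖ ·) :=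
  funext₂ fun _ _ => propext underlyingEdge_Icc_iff_covBy

theorem reflTransGen_covBy_of_finite_Icc (huv : u ≤ v) (hfin : (Set.Icc u v).Finite) :
    Relation.ReflTransGen (· ⋖ ·) u v := by
  classical
  have := hfin.fintype
  let _ : LocallyFiniteOrder (Set.Icc u v) := Fintype.toLocallyFiniteOrder
  have covBy_chain : Relation.ReflTransGen (· ⋖ ·)
      (⟨u, Set.left_mem_Icc.mpr huv⟩ : Set.Icc u v) ⟨v, Set.right_mem_Icc.mpr huv⟩ :=
    le_iff_reflTransGen_covBy.mp huv
  have ordConnected_range :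
      (Set.range (OrderEmbedding.subtype (· ∈ Set.Icc u v))).OrdConnected :=
    Subtype.range_coe.symm ▸ Set.ordConnected_Icc
  exact covBy_chain.lift Subtype.val fun _ _ h => h.image (.subtype _) ordConnected_range

end PartialOrder

theorem exists_isChain_cons_mem_of_reflTransGen {V : Type*} {E : V → V → Prop} {u v w : V}
    (huw : Relation.ReflTransGen E u w) (hwv : Relation.ReflTransGen E w v) :
    ∃ l : List V, (u :: l).IsChain E ∧ (u :: l).getLast? = some v ∧ w ∈ u :: l := by
  induction huw using Relation.ReflTransGen.head_induction_on with
  | refl =>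
    obtain ⟨l, hchain, hlast⟩ := List.exists_isChain_cons_of_relationReflTransGen hwv
    exact ⟨l, hchain, hlast ▸ List.getLast?_eq_some_getLast _, List.mem_cons_self⟩
  | @head a b hab _ ih =>
    obtain ⟨l, hchain, hlast, hmem⟩ := ih
    exact ⟨b :: l, hchain.cons_cons hab, by rwa [List.getLast?_cons_cons],
      List.mem_cons_of_mem a hmem⟩

theorem isDiPath_cons_of_isChain_of_lt {V : Type*} [Preorder V] {E : V → V → Prop}
    (hlt : ∀ a b, E a b → a < b) {u v : V} {l : List V}
    (hchain : (u :: l).IsChain E) (hlast : (u :: l).getLast? = some v) :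
    IsDiPath E u v (u :: l) :=
  ⟨hchain, (hchain.imp hlt).sortedLT.nodup, rfl, hlast⟩

theorem stmt_5_general {V : Type*} {R : V → V → Set V} (hR : IsPosetFunction R) {u v w : V}
    (hw : w ∈ R u v) (hfin : (R u v).Finite) :
    ∃ p : List V, IsDiPath (underlyingEdge R) u v p ∧ w ∈ p := by
  obtain ⟨_, rfl⟩ := hR.exists_partialOrder_eq_Icc
  obtain ⟨huw, hwv⟩ := hw
  have chain_u_w : Relation.ReflTransGen (· ⋖ ·) u w :=
    reflTransGen_covBy_of_finite_Icc huw (hfin.subset (Set.Icc_subset_Icc_right hwv))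
  have chain_w_v : Relation.ReflTransGen (· ⋖ ·) w v :=
    reflTransGen_covBy_of_finite_Icc hwv (hfin.subset (Set.Icc_subset_Icc_left huw))
  obtain ⟨l, hchain, hlast, hmem⟩ := exists_isChain_cons_mem_of_reflTransGen chain_u_w chain_w_v
  rw [underlyingEdge_Icc_eq_covBy]
  exact ⟨u :: l, isDiPath_cons_of_isChain_of_lt (fun _ _ => CovBy.lt) hchain hlast, hmem⟩

/-- For a poset function `R`, if `w ∈ R(u,v)` and `R(u,v) ≠ ∅`, then there
is a directed path in the underlying digraph `G_R` from `u` to `v` passing through `w`. -/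
theorem stmt_5 {V : Type*} [Fintype V] [Nonempty V]
    (R : V → V → Set V)
    -- (t0)
    (t0 : ∀ u v w, R u w ≠ ∅ → R w v ≠ ∅ → R u v ≠ ∅)
    -- (t1)
    (t1 : ∀ u v, R u v ≠ ∅ → u ∈ R u v ∧ v ∈ R u v)
    -- (t3)
    (t3 : ∀ u, R u u = {u})
    -- (t2a)
    (t2a : ∀ u v, R u v ≠ ∅ → u ≠ v → R v u = ∅)
    -- (tr1)
    (tr1 : ∀ u v w, u ≠ v → R u w ≠ ∅ → R w v ≠ ∅ → R u w ∪ R w v ⊆ R u v)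
    -- (tr2)
    (tr2 : ∀ u v w, u ≠ v → (R u w = ∅ ∨ R w v = ∅) → w ∉ R u v)
    (u v w : V) (hw : w ∈ R u v) (hne : R u v ≠ ∅) :
    ∃ p : List V, IsDiPath (underlyingEdge R) u v p ∧ w ∈ p := by
  exact stmt_5_general ⟨t0, t1, t3, t2a, tr1, tr2⟩ hw (R u v).toFinite
end

section
/- Let G be a finite digraph on a nonempty vertex set V and let A_G be its all-paths transit function. Then A_G is a directed transit function (it satisfies (t0), (t1), (t3)) and additionally satisfies: (tr2) for all u ≠ v, A_G(u,w) = ∅ or A_G(w,v) = ∅ implies w ∉ A_G(u,v); (b5) A_G(u,w) ∩ A_G(w,v) = {w} implies A_G(u,w) ∪ A_G(w,v) ⊆ A_G(u,v); and (Mod) A_G(u,w) ≠ ∅ and A_G(w,v) ≠ ∅ imply A_G(u,v) ∩ A_G(u,w) ∩ A_G(w,v) ≠ ∅. -/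
/-- The all-paths transit function of the digraph with edge relation `E`. -/
def allPaths {V : Type*} (E : V → V → Prop) (u v : V) : Set V :=
  {x : V | ∃ p : List V, IsDiPath E u v p ∧ x ∈ p}

/-!
Given paths `p` from `u` to `w` and `q` from `w` to `v`, follow `p` up to the first vertex `x` that
lies on `q`, then follow `q` from `x` on. The initial piece avoids `q` except at `x`, so no vertex
is repeated, and `x` lies on `p`, on `q` and on the new path. This gives (Mod), hence (t0). Under
the hypothesis of (b5) the only common vertex of `p` and `q` is `w`, so their concatenation is
already a path.
-/

theorem exists_eq_append_cons_of_not_disjoint {α : Type*} {p q : List α} (h : ¬ p.Disjoint q) :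
    ∃ a x b, p = a ++ x :: b ∧ x ∈ q ∧ a.Disjoint q := by
  classical
  obtain ⟨y, hyp, hyq⟩ : ∃ y ∈ p, y ∈ q := by simpa [List.Disjoint] using h
  obtain ⟨x, hx⟩ : ∃ x, p.find? (· ∈ q) = some x :=
    Option.isSome_iff_exists.1 (List.find?_isSome.2 ⟨y, hyp, by simpa using hyq⟩)
  obtain ⟨hxq, a, b, hp, ha⟩ := List.find?_eq_some_iff_append.1 hx
  exact ⟨a, x, b, hp, by simpa using hxq, fun z hz => by simpa using ha z hz⟩

section

variable {V : Type*} {E : V → V → Prop} {u v w x : V} {p q a b : List V}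

namespace IsDiPath

theorem singleton (E : V → V → Prop) (u : V) : IsDiPath E u u [u] :=
  ⟨List.isChain_singleton u, List.nodup_singleton u, rfl, rfl⟩

theorem left_mem (h : IsDiPath E u v p) : u ∈ p :=
  List.mem_of_mem_head? h.2.2.1

theorem right_mem (h : IsDiPath E u v p) : v ∈ p :=
  List.mem_of_mem_getLast? h.2.2.2

theorem exists_eq_cons (h : IsDiPath E u v p) : ∃ b, p = u :: b :=
  List.head?_eq_some_iff.1 h.2.2.1

theorem exists_eq_append_singleton (h : IsDiPath E u v p) : ∃ a, p = a ++ [v] :=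
  List.getLast?_eq_some_iff.1 h.2.2.2

theorem append_cons_iff :
    IsDiPath E u v (a ++ x :: b) ↔
      IsDiPath E u x (a ++ [x]) ∧ IsDiPath E x v (x :: b) ∧ a.Disjoint b := by
  have chain_iff : (a ++ x :: b).IsChain E ↔ (a ++ [x]).IsChain E ∧ (x :: b).IsChain E :=
    List.isChain_split
  have nodup_iff : (a ++ x :: b).Nodup ↔ (a ++ [x]).Nodup ∧ (x :: b).Nodup ∧ a.Disjoint b := by
    simp only [List.nodup_append', List.nodup_cons, List.disjoint_cons_right]
    tauto
  have head_eq : (a ++ x :: b).head? = (a ++ [x]).head? := by cases a <;> rfl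
  have last_eq : (a ++ x :: b).getLast? = (x :: b).getLast? :=
    List.getLast?_append_of_ne_nil a (List.cons_ne_nil x b)
  constructor
  · rintro ⟨chain, nodup, head, last⟩
    obtain ⟨chain_a, chain_b⟩ := chain_iff.1 chain
    obtain ⟨nodup_a, nodup_b, disjoint⟩ := nodup_iff.1 nodup
    exact ⟨⟨chain_a, nodup_a, head_eq ▸ head, List.getLast?_concat⟩,
      ⟨chain_b, nodup_b, rfl, last_eq ▸ last⟩, disjoint⟩
  · rintro ⟨⟨chain_a, nodup_a, head, -⟩, ⟨chain_b, nodup_b, -, last⟩, disjoint⟩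
    exact ⟨chain_iff.2 ⟨chain_a, chain_b⟩, nodup_iff.2 ⟨nodup_a, nodup_b, disjoint⟩,
      head_eq ▸ head, last_eq ▸ last⟩

theorem eq_singleton (h : IsDiPath E u u p) : p = [u] := by
  obtain ⟨b, rfl⟩ := h.exists_eq_cons
  obtain rfl | hb := eq_or_ne b []
  · rfl
  · have last_mem : u ∈ b := List.mem_of_mem_getLast? (by
      simpa [List.getLast?_cons_of_ne_nil hb] using h.2.2.2)
    exact absurd last_mem h.2.1.notMem

theorem exists_splice (hp : IsDiPath E u w p) (hq : IsDiPath E w v q) :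
    ∃ x r, IsDiPath E u v r ∧ x ∈ r ∧ x ∈ p ∧ x ∈ q := by
  have not_disjoint : ¬ p.Disjoint q := fun hd => hd hp.right_mem hq.left_mem
  obtain ⟨a, x, b, rfl, hx, ha⟩ := exists_eq_append_cons_of_not_disjoint not_disjoint
  obtain ⟨c, d, rfl⟩ := List.append_of_mem hx
  have to_x : IsDiPath E u x (a ++ [x]) := (append_cons_iff.1 hp).1
  have from_x : IsDiPath E x v (x :: d) := (append_cons_iff.1 hq).2.1
  have had : a.Disjoint d := fun y hya hyd => ha hya (by simp [hyd])
  exact ⟨x, a ++ x :: d, append_cons_iff.2 ⟨to_x, from_x, had⟩, by simp, by simp, by simp⟩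

theorem exists_concat (hp : IsDiPath E u w p) (hq : IsDiPath E w v q)
    (h : ∀ y ∈ p, y ∈ q → y = w) : ∃ r, IsDiPath E u v r ∧ p ⊆ r ∧ q ⊆ r := by
  obtain ⟨a, rfl⟩ := hp.exists_eq_append_singleton
  obtain ⟨b, rfl⟩ := hq.exists_eq_cons
  have hab : a.Disjoint b := fun y hya hyb => by
    obtain rfl : y = w := h y (by simp [hya]) (by simp [hyb])
    exact hq.2.1.notMem hyb
  exact ⟨a ++ w :: b, append_cons_iff.2 ⟨hp, hq, hab⟩, by simp, by simp⟩

end IsDiPath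

theorem allPaths_nonempty_iff : (allPaths E u v).Nonempty ↔ ∃ p, IsDiPath E u v p :=
  ⟨fun ⟨_, p, hp, _⟩ => ⟨p, hp⟩, fun ⟨p, hp⟩ => ⟨u, p, hp, hp.left_mem⟩⟩

theorem left_mem_allPaths (h : (allPaths E u v).Nonempty) : u ∈ allPaths E u v :=
  let ⟨p, hp⟩ := allPaths_nonempty_iff.1 h
  ⟨p, hp, hp.left_mem⟩

theorem right_mem_allPaths (h : (allPaths E u v).Nonempty) : v ∈ allPaths E u v :=
  let ⟨p, hp⟩ := allPaths_nonempty_iff.1 h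
  ⟨p, hp, hp.right_mem⟩

theorem allPaths_self (E : V → V → Prop) (u : V) : allPaths E u u = {u} := by
  refine Set.Subset.antisymm ?_ (Set.singleton_subset_iff.2 ⟨[u], .singleton E u, by simp⟩)
  rintro x ⟨p, hp, hx⟩
  simpa [hp.eq_singleton] using hx

theorem allPaths_nonempty_of_mem (h : w ∈ allPaths E u v) :
    (allPaths E u w).Nonempty ∧ (allPaths E w v).Nonempty := by
  obtain ⟨p, hp, hw⟩ := h
  obtain ⟨a, b, rfl⟩ := List.append_of_mem hw
  obtain ⟨to_w, from_w, -⟩ := IsDiPath.append_cons_iff.1 hp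
  exact ⟨allPaths_nonempty_iff.2 ⟨_, to_w⟩, allPaths_nonempty_iff.2 ⟨_, from_w⟩⟩

theorem allPaths_inter_nonempty (huw : (allPaths E u w).Nonempty)
    (hwv : (allPaths E w v).Nonempty) :
    (allPaths E u v ∩ allPaths E u w ∩ allPaths E w v).Nonempty := by
  obtain ⟨p, hp⟩ := allPaths_nonempty_iff.1 huw
  obtain ⟨q, hq⟩ := allPaths_nonempty_iff.1 hwv
  obtain ⟨x, r, hr, hxr, hxp, hxq⟩ := hp.exists_splice hq
  exact ⟨x, ⟨⟨r, hr, hxr⟩, ⟨p, hp, hxp⟩⟩, ⟨q, hq, hxq⟩⟩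

theorem allPaths_nonempty_trans (huw : (allPaths E u w).Nonempty)
    (hwv : (allPaths E w v).Nonempty) : (allPaths E u v).Nonempty :=
  (allPaths_inter_nonempty huw hwv).mono fun _ hx => hx.1.1

theorem allPaths_union_subset (h : allPaths E u w ∩ allPaths E w v = {w}) :
    allPaths E u w ∪ allPaths E w v ⊆ allPaths E u v := by
  have concat {p q : List V} (hp : IsDiPath E u w p) (hq : IsDiPath E w v q) :
      ∃ r, IsDiPath E u v r ∧ p ⊆ r ∧ q ⊆ r :=
    hp.exists_concat hq fun _ hyp hyq => h.subset ⟨⟨p, hp, hyp⟩, ⟨q, hq, hyq⟩⟩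
  obtain ⟨⟨p₀, hp₀, -⟩, ⟨q₀, hq₀, -⟩⟩ : w ∈ allPaths E u w ∩ allPaths E w v := h ▸ rfl
  rintro x (⟨p, hp, hx⟩ | ⟨q, hq, hx⟩)
  · obtain ⟨r, hr, hpr, -⟩ := concat hp hq₀
    exact ⟨r, hr, hpr hx⟩
  · obtain ⟨r, hr, -, hqr⟩ := concat hp₀ hq
    exact ⟨r, hr, hqr hx⟩

end

theorem stmt_18_general {V : Type*} (E : V → V → Prop) :
    (∀ u v w, allPaths E u w ≠ ∅ → allPaths E w v ≠ ∅ → allPaths E u v ≠ ∅) ∧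
    (∀ u v, allPaths E u v ≠ ∅ → u ∈ allPaths E u v ∧ v ∈ allPaths E u v) ∧
    (∀ u, allPaths E u u = {u}) ∧
    (∀ u v w, (allPaths E u w = ∅ ∨ allPaths E w v = ∅) → w ∉ allPaths E u v) ∧
    (∀ u v w, allPaths E u w ∩ allPaths E w v = {w} →
        allPaths E u w ∪ allPaths E w v ⊆ allPaths E u v) ∧
    (∀ u v w, allPaths E u w ≠ ∅ → allPaths E w v ≠ ∅ →
        allPaths E u v ∩ allPaths E u w ∩ allPaths E w v ≠ ∅) := by
  simp only [← Set.nonempty_iff_ne_empty]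
  refine ⟨fun _ _ _ => allPaths_nonempty_trans,
    fun _ _ h => ⟨left_mem_allPaths h, right_mem_allPaths h⟩,
    allPaths_self E, ?_, fun _ _ _ => allPaths_union_subset, fun _ _ _ => allPaths_inter_nonempty⟩
  rintro u v w (huw | hwv) hw
  · exact (allPaths_nonempty_of_mem hw).1.ne_empty huw
  · exact (allPaths_nonempty_of_mem hw).2.ne_empty hwv

/-- For any finite digraph `G` on a nonempty vertex set, the all-paths
transit function `A_G` is a directed transit function ((t0), (t1), (t3)) and moreover
satisfies (tr2), (b5), and (Mod). -/
theorem stmt_18 {V : Type*} [Fintype V] [Nonempty V]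
    (E : V → V → Prop)
    (h_irrefl : ∀ x, ¬ E x x) :
    -- (t0)
    (∀ u v w, allPaths E u w ≠ ∅ → allPaths E w v ≠ ∅ → allPaths E u v ≠ ∅) ∧
    -- (t1)
    (∀ u v, allPaths E u v ≠ ∅ → u ∈ allPaths E u v ∧ v ∈ allPaths E u v) ∧
    -- (t3)
    (∀ u, allPaths E u u = {u}) ∧
    -- (tr2)
    (∀ u v w, u ≠ v → (allPaths E u w = ∅ ∨ allPaths E w v = ∅) →
        w ∉ allPaths E u v) ∧
    -- (b5)
    (∀ u v w, allPaths E u w ∩ allPaths E w v = {w} →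
        allPaths E u w ∪ allPaths E w v ⊆ allPaths E u v) ∧
    -- (Mod)
    (∀ u v w, allPaths E u w ≠ ∅ → allPaths E w v ≠ ∅ →
        allPaths E u v ∩ allPaths E u w ∩ allPaths E w v ≠ ∅) :=
  let ⟨t0, t1, t3, tr2, b5, mod⟩ := stmt_18_general E
  ⟨t0, t1, t3, fun u v w _ => tr2 u v w, b5, mod⟩
end
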